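/- arXiv:1712.06301 — 2 statements merged into one kernel-verified Lean document; each statement's English description precedes it below -/
import Mathlib

section
/- Linear-quadratic Gaussian matrix expectation: let W be a q×p random matrix with i.i.d. N(0,1) entries, let M be a fixed q×p real matrix, and let Θ be a symmetric q×q matrix such that I_q − 2Θ is positive definite. Then E[exp(2 tr(Mᵀ W) + tr(Θ W Wᵀ))] = det(I_q − 2Θ)^{−p/2} · exp(2 tr(Mᵀ (I_q − 2Θ)^{−1} M)). -/
open Matrix MeasureTheory ProbabilityTheory Real

noncomputable section

/-- The standard Gaussian measure on `ι → ℝ` is invariant under orthogonal matrices. -/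
lemma measurePreserving_mulVec_pi_gaussianReal {ι : Type*} [Fintype ι] [DecidableEq ι]
    {U : Matrix ι ι ℝ} (hU : U ∈ unitary (Matrix ι ι ℝ)) :
    MeasurePreserving (fun x : ι → ℝ => U *ᵥ x)
      (Measure.pi fun _ => gaussianReal 0 1) (Measure.pi fun _ => gaussianReal 0 1) := by
  have hto : MeasurePreserving (WithLp.toLp 2 : (ι → ℝ) → EuclideanSpace ℝ ι)
      (Measure.pi fun _ => gaussianReal 0 1) (stdGaussian (EuclideanSpace ℝ ι)) :=
    ⟨by fun_prop, map_pi_eq_stdGaussian⟩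
  have hof : MeasurePreserving (WithLp.ofLp : EuclideanSpace ℝ ι → (ι → ℝ))
      (stdGaussian (EuclideanSpace ℝ ι)) (Measure.pi fun _ => gaussianReal 0 1) := by
    refine ⟨by fun_prop, ?_⟩
    rw [← map_pi_eq_stdGaussian, Measure.map_map (by fun_prop) (by fun_prop)]
    exact Measure.map_id
  let T := toEuclideanCLM (n := ι) (𝕜 := ℝ) U
  have hT : T ∈ unitary (EuclideanSpace ℝ ι →L[ℝ] EuclideanSpace ℝ ι) := by
    rw [Unitary.mem_iff] at hU ⊢
    simp only [T, ← map_star, ← map_mul, hU.1, hU.2, map_one, and_self]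
  have he : MeasurePreserving (T : EuclideanSpace ℝ ι → EuclideanSpace ℝ ι)
      (stdGaussian (EuclideanSpace ℝ ι)) (stdGaussian (EuclideanSpace ℝ ι)) :=
    ⟨T.continuous.measurable, stdGaussian_map (Unitary.linearIsometryEquiv ⟨T, hT⟩)⟩
  exact (hof.comp he).comp hto

/-- A matrix with independent standard normal entries is, in law, invariant under multiplication
on the left by an orthogonal matrix. -/
lemma measurePreserving_mul_pi_pi_gaussianReal {m n : Type*} [Fintype m] [Fintype n]
    [DecidableEq m] [DecidableEq n] {U : Matrix m m ℝ} (hU : U ∈ unitary (Matrix m m ℝ)) :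
    MeasurePreserving (fun w : m → n → ℝ => Matrix.of.symm (U * Matrix.of w))
      (Measure.pi fun _ => Measure.pi fun _ => gaussianReal 0 1)
      (Measure.pi fun _ => Measure.pi fun _ => gaussianReal 0 1) := by
  have hc : MeasurePreserving (MeasurableEquiv.curry m n ℝ)
      (Measure.pi fun _ => gaussianReal 0 1)
      (Measure.pi fun _ => Measure.pi fun _ => gaussianReal 0 1) := by
    refine ⟨MeasurableEquiv.measurable _, ?_⟩
    simpa only [Measure.infinitePi_eq_pi] using
      Measure.infinitePi_map_curry (fun (_ : m) (_ : n) => gaussianReal 0 1)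
  have hK := measurePreserving_mulVec_pi_gaussianReal
    (kronecker_mem_unitary hU (one_mem (unitary (Matrix n n ℝ))))
  convert (hc.comp hK).comp (hc.symm _) using 1
  ext w i j
  simp [MeasurableEquiv.coe_curry, MeasurableEquiv.coe_curry_symm, Matrix.mul_apply,
    mulVec, dotProduct, Fintype.sum_prod_type, Matrix.one_apply]

lemma integral_exp_quadratic_gaussianReal (b : ℝ) {a : ℝ} (ha : 0 < a) :
    ∫ x, Real.exp (2 * b * x + (1 - a) / 2 * x ^ 2) ∂(gaussianReal 0 1) =
      a ^ (-(1 : ℝ) / 2) * Real.exp (2 * (b ^ 2 / a)) := by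
  have h (x : ℝ) : gaussianPDFReal 0 1 x • Real.exp (2 * b * x + (1 - a) / 2 * x ^ 2) =
      (√(2 * π))⁻¹ * Real.exp (2 * (b ^ 2 / a)) *
        Real.exp (-(a / 2) * (x - 2 * b / a) ^ 2) := by
    simp only [gaussianPDFReal, smul_eq_mul, NNReal.coe_one, mul_one, mul_assoc, ← Real.exp_add]
    congr 2
    field
  rw [integral_gaussianReal_eq_integral_smul one_ne_zero]
  simp_rw [h]
  rw [integral_const_mul, integral_sub_right_eq_self (fun x => Real.exp (-(a / 2) * x ^ 2)),
    integral_gaussian, show π / (a / 2) = 2 * π / a by field, Real.sqrt_div (by positivity),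
    neg_div, Real.rpow_neg ha.le, ← Real.sqrt_eq_rpow]
  have : √(2 * π) ≠ 0 := by positivity
  field

theorem stmt_14 (q p : ℕ) (M : Matrix (Fin q) (Fin p) ℝ)
    (Θ : Matrix (Fin q) (Fin q) ℝ) (hΘ : Θ.IsSymm)
    (hpos : ((1 : Matrix (Fin q) (Fin q) ℝ) - (2 : ℝ) • Θ).PosDef) :
    ∫ w : Fin q → Fin p → ℝ,
        Real.exp (2 * Matrix.trace (Mᵀ * Matrix.of w) +
          Matrix.trace (Θ * (Matrix.of w * (Matrix.of w)ᵀ)))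
        ∂(Measure.pi fun _ : Fin q => Measure.pi fun _ : Fin p => gaussianReal 0 1) =
      ((1 : Matrix (Fin q) (Fin q) ℝ) - (2 : ℝ) • Θ).det ^ (-(p : ℝ) / 2) *
        Real.exp (2 * Matrix.trace (Mᵀ * ((1 : Matrix (Fin q) (Fin q) ℝ) - (2 : ℝ) • Θ)⁻¹ * M)) := by
  set A : Matrix (Fin q) (Fin q) ℝ := 1 - (2 : ℝ) • Θ with hA
  let d := hpos.isHermitian.eigenvalues
  have hd : ∀ i, 0 < d i := hpos.eigenvalues_pos
  let U : Matrix (Fin q) (Fin q) ℝ := hpos.isHermitian.eigenvectorUnitary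
  have hU : U ∈ unitary (Matrix (Fin q) (Fin q) ℝ) := hpos.isHermitian.eigenvectorUnitary.2
  have hUU : Uᵀ * U = 1 := by simpa [star_eq_conjTranspose] using (Unitary.mem_iff.1 hU).1
  have hUU' : U * Uᵀ = 1 := by simpa [star_eq_conjTranspose] using (Unitary.mem_iff.1 hU).2
  have hspec : A = U * diagonal d * Uᵀ := by
    simpa [Unitary.conjStarAlgAut_apply, star_eq_conjTranspose, U, d, Function.comp_def] using
      hpos.isHermitian.spectral_theorem
  have hdet : A.det = ∏ i, d i := by simpa using hpos.isHermitian.det_eq_prod_eigenvalues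
  have hinv : A⁻¹ = U * diagonal (fun i => (d i)⁻¹) * Uᵀ := by
    apply Matrix.inv_eq_right_inv
    calc A * (U * diagonal (fun i => (d i)⁻¹) * Uᵀ)
        = U * (diagonal d * (Uᵀ * U) * diagonal (fun i => (d i)⁻¹)) * Uᵀ := by
          rw [hspec]; simp only [Matrix.mul_assoc]
      _ = 1 := by
          rw [hUU, Matrix.mul_one, diagonal_mul_diagonal]
          simp [(hd _).ne', hUU']
  have hTheta : Θ = U * diagonal (fun i => (1 - d i) / 2) * Uᵀ := by
    have h1 : Θ = (2 : ℝ)⁻¹ • (1 - A) := by rw [hA]; simp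
    have h2 : diagonal (fun i => (1 - d i) / 2) = (2 : ℝ)⁻¹ • (1 - diagonal d) := by
      rw [← diagonal_one, diagonal_sub, ← diagonal_smul]
      congr 1; ext i; simp; ring
    rw [h1, h2, hspec, Matrix.mul_smul, Matrix.smul_mul, Matrix.mul_sub, Matrix.sub_mul,
      Matrix.mul_one, hUU']
  let N : Matrix (Fin q) (Fin p) ℝ := Uᵀ * M
  have hquad (a : Fin q → ℝ) (X : Matrix (Fin q) (Fin p) ℝ) :
      trace (Xᵀ * diagonal a * X) = ∑ i, ∑ j, a i * X i j ^ 2 := by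
    rw [trace, Finset.sum_comm]
    simp only [diag_apply, Matrix.mul_apply (M := Xᵀ * diagonal a), mul_diagonal, transpose_apply]
    exact Finset.sum_congr rfl fun _ _ => Finset.sum_congr rfl fun _ _ => by ring
  have hexp (w : Fin q → Fin p → ℝ) :
      Real.exp (2 * trace (Mᵀ * (U * Matrix.of w)) +
        trace (Θ * ((U * Matrix.of w) * (U * Matrix.of w)ᵀ))) =
      ∏ i, ∏ j, Real.exp (2 * N i j * w i j + (1 - d i) / 2 * w i j ^ 2) := by
    have h1 : trace (Mᵀ * (U * Matrix.of w)) = ∑ i, ∑ j, N i j * w i j := by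
      rw [← Matrix.mul_assoc, show Mᵀ * U = Nᵀ by simp [N], trace, Finset.sum_comm]
      simp [Matrix.mul_apply (M := Nᵀ)]
    have h2 : trace (Θ * ((U * Matrix.of w) * (U * Matrix.of w)ᵀ)) =
        ∑ i, ∑ j, (1 - d i) / 2 * w i j ^ 2 := by
      rw [← Matrix.mul_assoc, trace_mul_comm, ← Matrix.mul_assoc, hTheta]
      refine (congrArg trace ?_).trans (hquad _ (Matrix.of w))
      calc _ = (Matrix.of w)ᵀ * (Uᵀ * U) * diagonal (fun i => (1 - d i) / 2) * (Uᵀ * U) *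
            Matrix.of w := by simp only [transpose_mul, Matrix.mul_assoc]
        _ = _ := by simp only [hUU, Matrix.mul_one]
    simp_rw [← Real.exp_sum, Finset.sum_add_distrib, h1, h2, Finset.mul_sum, mul_assoc]
  have hrhs : trace (Mᵀ * A⁻¹ * M) = ∑ i, ∑ j, N i j ^ 2 / d i := by
    have : Mᵀ * A⁻¹ * M = Nᵀ * diagonal (fun i => (d i)⁻¹) * N := by
      simp only [hinv, N, transpose_mul, transpose_transpose, Matrix.mul_assoc]
    rw [this, hquad]
    simp_rw [div_eq_inv_mul]
  have hmp := measurePreserving_mul_pi_pi_gaussianReal (n := Fin p) hU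
  rw [← hmp.map_eq, integral_map hmp.measurable.aemeasurable
    (Continuous.aestronglyMeasurable (by fun_prop))]
  calc _ = ∫ w : Fin q → Fin p → ℝ,
        ∏ i, ∏ j, Real.exp (2 * N i j * w i j + (1 - d i) / 2 * w i j ^ 2)
        ∂(Measure.pi fun _ => Measure.pi fun _ => gaussianReal 0 1) :=
          integral_congr_ae (.of_forall hexp)
    _ = ∏ i, ∏ j, (d i ^ (-(1 : ℝ) / 2) * Real.exp (2 * (N i j ^ 2 / d i))) := by
        rw [integral_fintype_prod_eq_prod (𝕜 := ℝ) (fun i (v : Fin p → ℝ) =>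
          ∏ j, Real.exp (2 * N i j * v j + (1 - d i) / 2 * v j ^ 2))]
        refine Finset.prod_congr rfl fun i _ => ?_
        rw [integral_fintype_prod_eq_prod (𝕜 := ℝ) (fun j (x : ℝ) =>
          Real.exp (2 * N i j * x + (1 - d i) / 2 * x ^ 2))]
        exact Finset.prod_congr rfl fun j _ => integral_exp_quadratic_gaussianReal _ (hd i)
    _ = _ := by
        simp_rw [Finset.prod_mul_distrib, ← Real.exp_sum, hrhs, Finset.mul_sum, hdet]
        congr 1
        rw [← Real.finsetProd_rpow _ _ fun i _ => (hd i).le]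
        refine Finset.prod_congr rfl fun i _ => ?_
        rw [Finset.prod_const, Finset.card_univ, Fintype.card_fin, ← Real.rpow_mul_natCast (hd i).le]
        congr 1; ring
end
end

section
/- Main theorem (Gaussian representation of Riesz distributions, rank-2 block case): let p, q ≥ 1, let s₁ ≥ p and s₂ ≥ s₁ be integers, and form the (p+q)×(s₂) random matrix U = [[U₁, 0],[U₂₁, U₀]], where U₁ (p×s₁), U₂₁ (q×s₁), U₀ (q×(s₂−s₁)) have independent i.i.d. N(0,1) entries. Then X = U Uᵀ has Laplace transform E[exp(tr(θX))] = Δ_s((I/2 − θ)^{−1}) / Δ_s(2I) for symmetric θ with I/2 − θ positive definite, where s = (s₁/2,…,s₁/2, s₂/2,…,s₂/2) ∈ ℝ^{p+q} (first p entries s₁/2, last q entries s₂/2); i.e., X has the Riesz distribution R(s, I/2). -/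
open Matrix

noncomputable section

/-- The determinant of the leading principal `k × k` submatrix of `x`. -/
def lpm {r : ℕ} (x : Matrix (Fin r) (Fin r) ℝ) (k : ℕ) (h : k ≤ r) : ℝ :=
  (x.submatrix (fun i : Fin k => Fin.castLE h i) (fun i : Fin k => Fin.castLE h i)).det

/-- The generalized power `Δ_s(x) = ∏ₖ Δₖ(x)^(sₖ - sₖ₊₁)` (convention `s_{r+1} = 0`). -/
def genPow {r : ℕ} (s : Fin r → ℝ) (x : Matrix (Fin r) (Fin r) ℝ) : ℝ :=
  ∏ k : Fin r, (lpm x (k.val + 1) k.isLt) ^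
    (s k - if h : k.val + 1 < r then s ⟨k.val + 1, h⟩ else 0)
open MeasureTheory ProbabilityTheory

/-- The Gaussian sample matrix with missing data replaced by 0:
`U = [[U₁, 0], [U₂₁, U₀]]` where the top-right `p × (s₂ − s₁)` block is zero and all
other entries are the (i.i.d. standard normal) entries of `w`. -/
def missingDataMatrix (p q s₁ s₂ : ℕ) (w : Fin (p + q) → Fin s₂ → ℝ) :
    Matrix (Fin (p + q)) (Fin s₂) ℝ :=
  Matrix.of fun i j => if i.val < p ∧ s₁ ≤ j.val then 0 else w i j

theorem measurePreserving_curry_pi {α β X : Type*} [Fintype α] [Fintype β] [MeasurableSpace X]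
    (μ : Measure X) [IsProbabilityMeasure μ] :
    MeasurePreserving (MeasurableEquiv.curry α β X)
      (Measure.pi fun _ : α × β => μ)
      (Measure.pi fun _ : α => Measure.pi fun _ : β => μ) := by
  refine ⟨MeasurableEquiv.measurable _, ?_⟩
  simpa only [Measure.infinitePi_eq_pi] using
    Measure.infinitePi_map_curry (fun (_ : α) (_ : β) => μ)

/-- Interchanging the two indices preserves an iterated product of copies of one measure. -/
theorem measurePreserving_swap_pi_pi {ι κ X : Type*} [Fintype ι] [Fintype κ] [MeasurableSpace X]
    (μ : Measure X) [IsProbabilityMeasure μ] :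
    MeasurePreserving (fun (w : ι → κ → X) (j : κ) (i : ι) => w i j)
      (Measure.pi fun _ : ι => Measure.pi fun _ : κ => μ)
      (Measure.pi fun _ : κ => Measure.pi fun _ : ι => μ) := by
  have h := ((measurePreserving_curry_pi (α := κ) (β := ι) μ).comp
    (measurePreserving_piCongrLeft (fun _ : κ × ι => μ) (Equiv.prodComm ι κ))).comp
    (measurePreserving_curry_pi (α := ι) (β := κ) μ).symm
  convert h using 1
  ext w j i
  simp [MeasurableEquiv.piCongrLeft, Equiv.piCongrLeft, MeasurableEquiv.curry]

theorem integral_exp_sub_mul_sq_gaussianReal {a : ℝ} :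
    ∫ x, Real.exp ((1 / 2 - a) * x ^ 2) ∂gaussianReal 0 1 = (√(2 * a))⁻¹ := by
  rw [integral_gaussianReal_eq_integral_smul one_ne_zero]
  have h (x : ℝ) : gaussianPDFReal 0 1 x • Real.exp ((1 / 2 - a) * x ^ 2) =
      (√(2 * Real.pi))⁻¹ * Real.exp (-a * x ^ 2) := by
    simp only [gaussianPDFReal, smul_eq_mul, NNReal.coe_one, mul_one, sub_zero]
    rw [mul_assoc, ← Real.exp_add]
    ring_nf
  simp_rw [h]
  rw [integral_const_mul, integral_gaussian, ← Real.sqrt_inv, ← Real.sqrt_inv,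
    ← Real.sqrt_mul (by positivity)]
  congr 1
  field_simp

/-- The Laplace transform of the square of a standard Gaussian vector. -/
theorem integral_exp_quadratic_gaussian {ι : Type*} [Fintype ι] [DecidableEq ι]
    {A : Matrix ι ι ℝ} (hA : A.PosDef) :
    ∫ y : ι → ℝ, Real.exp (y ⬝ᵥ ((1 / 2 : ℝ) • (1 : Matrix ι ι ℝ) - A) *ᵥ y)
        ∂(Measure.pi fun _ : ι => gaussianReal 0 1) = (√((2 : ℝ) • A).det)⁻¹ := by
  set b := hA.1.eigenvectorBasis
  set F : EuclideanSpace ℝ ι → ℝ := fun z =>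
    Real.exp (z.ofLp ⬝ᵥ ((1 / 2 : ℝ) • (1 : Matrix ι ι ℝ) - A) *ᵥ z.ofLp)
  have hF : Continuous F := by fun_prop
  have hcoord (x : ι → ℝ) : F (∑ i, x i • b i) =
      ∏ i, Real.exp ((1 / 2 - hA.1.eigenvalues i) * x i ^ 2) := by
    have hmul : ((1 / 2 : ℝ) • (1 : Matrix ι ι ℝ) - A) *ᵥ (∑ i, x i • b i).ofLp =
        (∑ i, ((1 / 2 - hA.1.eigenvalues i) * x i) • b i).ofLp := by
      simp only [WithLp.ofLp_sum, WithLp.ofLp_smul, Matrix.mulVec_sum, Matrix.mulVec_smul]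
      refine Finset.sum_congr rfl fun i _ => ?_
      rw [Matrix.sub_mulVec, Matrix.smul_mulVec, Matrix.one_mulVec, hA.1.mulVec_eigenvectorBasis]
      module
    have hinner (u v : EuclideanSpace ℝ ι) : u.ofLp ⬝ᵥ v.ofLp = inner ℝ u v := by
      rw [EuclideanSpace.inner_eq_star_dotProduct, dotProduct_comm]
      simp
    simp only [F]
    rw [hmul, hinner, b.orthonormal.inner_sum, ← Real.exp_sum]
    congr 1
    refine Finset.sum_congr rfl fun i _ => ?_
    simp
    ring
  calc
    _ = ∫ y, F y ∂stdGaussian (EuclideanSpace ℝ ι) := by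
      rw [← map_pi_eq_stdGaussian, integral_map (by fun_prop) hF.aestronglyMeasurable]
    _ = ∏ i, (√(2 * hA.1.eigenvalues i))⁻¹ := by
      rw [stdGaussian_eq_map_pi_orthonormalBasis b,
        integral_map (Continuous.aemeasurable (by fun_prop)) hF.aestronglyMeasurable]
      simp_rw [hcoord]
      rw [integral_fintype_prod_eq_prod
        (f := fun i t => Real.exp ((1 / 2 - hA.1.eigenvalues i) * t ^ 2))]
      simp_rw [integral_exp_sub_mul_sq_gaussianReal]
    _ = _ := by
      rw [Finset.prod_inv_distrib, ← Real.sqrt_prod _ fun i _ => by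
        have := hA.eigenvalues_pos i; positivity]
      rw [Finset.prod_mul_distrib, Matrix.det_smul, hA.1.det_eq_prod_eigenvalues]
      simp

theorem posDef_fromBlocks_zero {m n : Type*} [Fintype m] [Fintype n]
    {A : Matrix m m ℝ} {D : Matrix n n ℝ} (hA : A.PosDef) (hD : D.PosDef) :
    (Matrix.fromBlocks A 0 0 D).PosDef := by
  refine Matrix.PosDef.of_dotProduct_mulVec_pos
    (Matrix.IsHermitian.fromBlocks hA.1 (by simp) hD.1) fun x hx => ?_
  obtain ⟨u, v, rfl⟩ : ∃ u v, x = Sum.elim u v :=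
    ⟨x ∘ Sum.inl, x ∘ Sum.inr, (Sum.elim_comp_inl_inr x).symm⟩
  have hA' := hA.posSemidef.dotProduct_mulVec_nonneg u
  have hD' := hD.posSemidef.dotProduct_mulVec_nonneg v
  have hsum : star (Sum.elim u v) ⬝ᵥ Matrix.fromBlocks A 0 0 D *ᵥ Sum.elim u v =
      star u ⬝ᵥ A *ᵥ u + star v ⬝ᵥ D *ᵥ v := by
    simp [Matrix.fromBlocks_mulVec, dotProduct]
  rw [hsum]
  by_cases hu : u = 0
  · have hv : v ≠ 0 := by
      rintro rfl
      exact hx (by simp [hu])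
    have := hD.dotProduct_mulVec_pos hv
    linarith
  · have := hA.dotProduct_mulVec_pos hu
    linarith

theorem trace_mul_mul_transpose_eq_sum {m n : Type*} [Fintype m] [Fintype n]
    (M : Matrix m m ℝ) (U : Matrix m n ℝ) :
    (M * (U * Uᵀ)).trace = ∑ j, (fun i => U i j) ⬝ᵥ M *ᵥ fun i => U i j := by
  rw [← Matrix.mul_assoc, Matrix.trace_mul_comm]
  rfl

/-- Jacobi's identity for a complementary pair of principal minors. -/
theorem det_toBlocks₁₁_inv {m n : Type*} [Fintype m] [Fintype n] [DecidableEq m] [DecidableEq n]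
    {A : Matrix (m ⊕ n) (m ⊕ n) ℝ} (hA : IsUnit A.det) (hD : IsUnit A.toBlocks₂₂.det) :
    A⁻¹.toBlocks₁₁.det = A.toBlocks₂₂.det / A.det := by
  obtain ⟨a, b, c, d, rfl⟩ : ∃ a b c d, A = Matrix.fromBlocks a b c d :=
    ⟨_, _, _, _, (Matrix.fromBlocks_toBlocks A).symm⟩
  rw [Matrix.toBlocks_fromBlocks₂₂] at hD ⊢
  let := Matrix.invertibleOfIsUnitDet _ hA
  let := Matrix.invertibleOfIsUnitDet _ hD
  let := Matrix.invertibleOfFromBlocks₂₂Invertible a b c d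
  have hdet := Matrix.det_fromBlocks₂₂ a b c d
  rw [← Matrix.invOf_eq_nonsing_inv, Matrix.invOf_fromBlocks₂₂_eq,
    Matrix.toBlocks_fromBlocks₁₁, Matrix.invOf_eq_nonsing_inv, Matrix.det_nonsing_inv,
    Ring.inverse_eq_inv', hdet]
  have := hD.ne_zero
  field_simp

theorem lpm_self {r : ℕ} (x : Matrix (Fin r) (Fin r) ℝ) : lpm x r le_rfl = x.det := by
  exact congrArg Matrix.det (Matrix.submatrix_id_id x)

theorem lpm_congr {r k l : ℕ} (x : Matrix (Fin r) (Fin r) ℝ) (h : k = l) (hk : k ≤ r) :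
    lpm x k hk = lpm x l (h ▸ hk) := by
  subst h
  rfl

/-- The generalized power of a two-step exponent involves only two minors. -/
theorem genPow_two_step {p q : ℕ} (hp : 1 ≤ p) (hq : 1 ≤ q) (a b : ℝ)
    (x : Matrix (Fin (p + q)) (Fin (p + q)) ℝ) :
    genPow (fun i : Fin (p + q) => if i.val < p then a else b) x =
      lpm x p (Nat.le_add_right p q) ^ (a - b) * x.det ^ b := by
  rw [genPow, Finset.prod_eq_mul (⟨p - 1, by omega⟩ : Fin (p + q)) ⟨p + q - 1, by omega⟩]
  · rw [lpm_congr x (show p - 1 + 1 = p by omega), lpm_congr x (show p + q - 1 + 1 = p + q by omega),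
      lpm_self]
    have h₁ : p - 1 + 1 < p + q := by omega
    have h₂ : ¬ p + q - 1 + 1 < p + q := by omega
    have h₃ : p - 1 < p := by omega
    have h₄ : ¬ p - 1 + 1 < p := by omega
    have h₅ : ¬ p + q - 1 < p := by omega
    simp only [h₁, h₂, h₃, h₄, h₅, dif_pos, dif_neg, if_true, if_false, not_false_eq_true, sub_zero]
  · simp only [ne_eq, Fin.mk.injEq]
    omega
  · rintro ⟨k, hk⟩ - ⟨hk₁, hk₂⟩
    simp only [ne_eq, Fin.mk.injEq] at hk₁ hk₂
    have h₁ : k + 1 < p + q := by omega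
    have h₂ : k + 1 < p ↔ k < p := by omega
    simp [h₁, h₂]
  · simp
  · simp

theorem lpm_two_smul_one {r k : ℕ} (h : k ≤ r) :
    lpm ((2 : ℝ) • (1 : Matrix (Fin r) (Fin r) ℝ)) k h = 2 ^ k := by
  rw [lpm, Matrix.submatrix_smul, Pi.smul_apply, Pi.smul_apply,
    Matrix.submatrix_one _ (Fin.castLE_injective h)]
  simp

theorem lpm_eq_det_toBlocks₁₁ {p q : ℕ} (x : Matrix (Fin (p + q)) (Fin (p + q)) ℝ) :
    lpm x p (Nat.le_add_right p q) =
      (x.submatrix finSumFinEquiv finSumFinEquiv).toBlocks₁₁.det := rfl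

/-- The trailing `q × q` diagonal block. -/
def trailingBlock {p q : ℕ} (x : Matrix (Fin (p + q)) (Fin (p + q)) ℝ) : Matrix (Fin q) (Fin q) ℝ :=
  x.submatrix (Fin.natAdd p) (Fin.natAdd p)

theorem posDef_trailingBlock {p q : ℕ} {A : Matrix (Fin (p + q)) (Fin (p + q)) ℝ} (hA : A.PosDef) :
    (trailingBlock A).PosDef :=
  hA.submatrix (Fin.natAdd_injective q p)

theorem lpm_inv {p q : ℕ} {A : Matrix (Fin (p + q)) (Fin (p + q)) ℝ} (hA : A.PosDef) :
    lpm A⁻¹ p (Nat.le_add_right p q) = (trailingBlock A).det / A.det := by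
  have hdet : (A.submatrix finSumFinEquiv finSumFinEquiv).det = A.det :=
    Matrix.det_submatrix_equiv_self _ _
  rw [lpm_eq_det_toBlocks₁₁, ← Matrix.inv_submatrix_equiv, det_toBlocks₁₁_inv, hdet]
  · rfl
  · rw [hdet]
    exact hA.det_pos.ne'.isUnit
  · exact (posDef_trailingBlock hA).det_pos.ne'.isUnit

/-- The Laplace transform of the square of a Gaussian vector whose first `p` coordinates are
replaced by zero. -/
theorem integral_exp_quadratic_gaussian_masked {p q : ℕ}
    {A : Matrix (Fin (p + q)) (Fin (p + q)) ℝ} (hA : A.PosDef) :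
    ∫ y : Fin (p + q) → ℝ, Real.exp ((fun i => if i.val < p then 0 else y i) ⬝ᵥ
        ((1 / 2 : ℝ) • (1 : Matrix (Fin (p + q)) (Fin (p + q)) ℝ) - A) *ᵥ
          fun i => if i.val < p then 0 else y i)
        ∂(Measure.pi fun _ : Fin (p + q) => gaussianReal 0 1) =
      (√((2 : ℝ) • trailingBlock A).det)⁻¹ := by
  set B₀ : Matrix (Fin p ⊕ Fin q) (Fin p ⊕ Fin q) ℝ :=
    Matrix.fromBlocks ((1 / 2 : ℝ) • 1) 0 0 (trailingBlock A)
  set B : Matrix (Fin (p + q)) (Fin (p + q)) ℝ :=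
    B₀.submatrix finSumFinEquiv.symm finSumFinEquiv.symm
  have hB₀ : B₀.PosDef := posDef_fromBlocks_zero
    (Matrix.PosDef.one.smul (by norm_num)) (posDef_trailingBlock hA)
  have hB : B.PosDef := hB₀.submatrix finSumFinEquiv.symm.injective
  have hquad (y : Fin (p + q) → ℝ) :
      (fun i => if i.val < p then 0 else y i) ⬝ᵥ
        ((1 / 2 : ℝ) • (1 : Matrix (Fin (p + q)) (Fin (p + q)) ℝ) - A) *ᵥ
          (fun i => if i.val < p then 0 else y i) =
      y ⬝ᵥ ((1 / 2 : ℝ) • (1 : Matrix (Fin (p + q)) (Fin (p + q)) ℝ) - B) *ᵥ y := by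
    simp only [dotProduct, Matrix.mulVec, Fin.sum_univ_add, Fin.val_castAdd, Fin.val_natAdd,
      Fin.is_lt, if_true, Nat.not_lt.mpr (Nat.le_add_right p _), if_false, zero_mul, mul_zero,
      Finset.sum_const_zero, zero_add, Matrix.sub_apply, Matrix.smul_apply, B, B₀,
      Matrix.submatrix_apply, finSumFinEquiv_symm_apply_castAdd, finSumFinEquiv_symm_apply_natAdd,
      Matrix.fromBlocks_apply₁₁, Matrix.fromBlocks_apply₁₂, Matrix.fromBlocks_apply₂₁,
      Matrix.fromBlocks_apply₂₂, Matrix.zero_apply, Matrix.one_apply, Fin.castAdd_inj,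
      Fin.natAdd_inj, trailingBlock, sub_self]
    have h (i : Fin p) (j : Fin q) : Fin.castAdd q i ≠ Fin.natAdd p j := by
      simp [Fin.ext_iff]; omega
    simp [h, fun i j => (h i j).symm]
  have hdet : ((2 : ℝ) • B).det = ((2 : ℝ) • trailingBlock A).det := by
    rw [Matrix.det_smul, Matrix.det_smul, Matrix.det_submatrix_equiv_self,
      Matrix.det_fromBlocks_zero₁₂, Matrix.det_smul]
    simp only [Fintype.card_fin, Matrix.det_one, mul_one]
    rw [pow_add, one_div, inv_pow]
    field_simp
  simp_rw [hquad]
  rw [integral_exp_quadratic_gaussian hB, hdet]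

theorem prod_fin_ite_le {m n : ℕ} (h : m ≤ n) (a b : ℝ) :
    ∏ j : Fin n, (if m ≤ j.val then b else a) = a ^ m * b ^ (n - m) := by
  obtain ⟨k, rfl⟩ := Nat.exists_eq_add_of_le h
  simp [Fin.prod_univ_add, Nat.not_le.mpr]

theorem inv_sqrt_pow_eq_exp {x : ℝ} (hx : 0 < x) (n : ℕ) :
    (√x)⁻¹ ^ n = Real.exp (-(n / 2 * Real.log x)) := by
  rw [Real.sqrt_eq_rpow, ← Real.rpow_neg hx.le, ← Real.rpow_mul_natCast hx.le,
    Real.rpow_def_of_pos hx]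
  ring_nf

theorem stmt_17 (p q s₁ s₂ : ℕ) (hp : 1 ≤ p) (hq : 1 ≤ q) (hs₁ : p ≤ s₁) (hs₂ : s₁ ≤ s₂)
    (θ : Matrix (Fin (p + q)) (Fin (p + q)) ℝ) (hθ : θ.IsSymm)
    (hpos : ((1 / 2 : ℝ) • (1 : Matrix (Fin (p + q)) (Fin (p + q)) ℝ) - θ).PosDef) :
    ∫ w : Fin (p + q) → Fin s₂ → ℝ,
        Real.exp (Matrix.trace (θ *
          (missingDataMatrix p q s₁ s₂ w * (missingDataMatrix p q s₁ s₂ w)ᵀ)))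
        ∂(Measure.pi fun _ : Fin (p + q) => Measure.pi fun _ : Fin s₂ => gaussianReal 0 1) =
      genPow (fun i : Fin (p + q) => if i.val < p then (s₁ : ℝ) / 2 else (s₂ : ℝ) / 2)
          (((1 / 2 : ℝ) • (1 : Matrix (Fin (p + q)) (Fin (p + q)) ℝ) - θ)⁻¹) /
        genPow (fun i : Fin (p + q) => if i.val < p then (s₁ : ℝ) / 2 else (s₂ : ℝ) / 2)
          ((2 : ℝ) • (1 : Matrix (Fin (p + q)) (Fin (p + q)) ℝ)) := by
  set A := (1 / 2 : ℝ) • (1 : Matrix (Fin (p + q)) (Fin (p + q)) ℝ) - θ with hAdef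
  have hθA : θ = (1 / 2 : ℝ) • (1 : Matrix (Fin (p + q)) (Fin (p + q)) ℝ) - A := by
    rw [hAdef, sub_sub_cancel]
  set G : Fin s₂ → (Fin (p + q) → ℝ) → ℝ := fun j y =>
    if s₁ ≤ j.val then
      Real.exp ((fun i => if i.val < p then 0 else y i) ⬝ᵥ θ *ᵥ
        fun i => if i.val < p then 0 else y i)
    else Real.exp (y ⬝ᵥ θ *ᵥ y) with hG
  have hcols (w : Fin (p + q) → Fin s₂ → ℝ) :
      Real.exp (Matrix.trace (θ *
        (missingDataMatrix p q s₁ s₂ w * (missingDataMatrix p q s₁ s₂ w)ᵀ))) =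
      ∏ j, G j fun i => w i j := by
    rw [trace_mul_mul_transpose_eq_sum, Real.exp_sum]
    refine Finset.prod_congr rfl fun j _ => ?_
    by_cases hj : s₁ ≤ j.val <;> simp [hG, missingDataMatrix, hj]
  have hGint (j : Fin s₂) : ∫ y, G j y ∂(Measure.pi fun _ : Fin (p + q) => gaussianReal 0 1) =
      if s₁ ≤ j.val then (√((2 : ℝ) • trailingBlock A).det)⁻¹ else (√((2 : ℝ) • A).det)⁻¹ := by
    split_ifs with hj
    · simp only [hG, hj, if_true]
      rw [hθA]
      exact integral_exp_quadratic_gaussian_masked hpos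
    · simp only [hG, hj, if_false]
      rw [hθA]
      exact integral_exp_quadratic_gaussian hpos
  have hGmeas : Measurable fun v : Fin s₂ → Fin (p + q) → ℝ => ∏ j, G j (v j) := by
    refine Finset.measurable_prod _ fun j _ => ?_
    have hmask : Measurable fun v : Fin s₂ → Fin (p + q) → ℝ =>
        fun i : Fin (p + q) => if i.val < p then 0 else v j i :=
      measurable_pi_lambda _ fun i => by split_ifs <;> fun_prop
    have hquad : Measurable fun y : Fin (p + q) → ℝ => Real.exp (y ⬝ᵥ θ *ᵥ y) :=
      Continuous.measurable (by fun_prop)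
    by_cases hj : s₁ ≤ j.val
    · simp only [hG, hj, if_true]
      exact hquad.comp hmask
    · simp only [hG, hj, if_false]
      exact hquad.comp (measurable_pi_apply j)
  have hswap := measurePreserving_swap_pi_pi (ι := Fin (p + q)) (κ := Fin s₂) (gaussianReal 0 1)
  simp_rw [hcols]
  rw [← integral_map (f := fun v : Fin s₂ → Fin (p + q) → ℝ => ∏ j, G j (v j))
    hswap.measurable.aemeasurable hGmeas.aestronglyMeasurable, hswap.map_eq,
    integral_fintype_prod_eq_prod]
  simp_rw [hGint]
  have ha := hpos.det_pos
  have hd := (posDef_trailingBlock hpos).det_pos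
  rw [prod_fin_ite_le hs₂, genPow_two_step hp hq, genPow_two_step hp hq, lpm_inv hpos,
    lpm_two_smul_one, Matrix.det_smul, Matrix.det_smul, Matrix.det_smul, Matrix.det_one, mul_one,
    Matrix.det_nonsing_inv, Ring.inverse_eq_inv', Fintype.card_fin, Fintype.card_fin,
    inv_sqrt_pow_eq_exp (by positivity), inv_sqrt_pow_eq_exp (by positivity),
    Real.rpow_def_of_pos (div_pos hd ha), Real.rpow_def_of_pos (inv_pos.mpr ha),
    Real.rpow_def_of_pos (by positivity), Real.rpow_def_of_pos (by positivity),
    ← Real.exp_add, ← Real.exp_add, ← Real.exp_add, ← Real.exp_sub,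
    Real.log_mul (by positivity) ha.ne', Real.log_mul (by positivity) hd.ne',
    Real.log_div hd.ne' ha.ne', Real.log_inv, Real.log_pow, Real.log_pow, Real.log_pow,
    Nat.cast_sub hs₂]
  push_cast
  ring_nf
end
end
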